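/- Let n ≥ 3 be an odd integer, let A = ℝ[x₁,…,xₙ]/(x₁² + ⋯ + xₙ² − 1), and let a₁,…,aₙ ∈ A be the images of x₁,…,xₙ. Then the column (a₁,…,aₙ) is unimodular (Aa₁ + ⋯ + Aaₙ = A), the map α : A → Aⁿ, a ↦ (a₁a,…,aₙa), is a split monomorphism, and its cokernel P satisfies P ⊕ A ≅ Aⁿ but P is not a free A-module; thus P is a stably free non-free A-module of rank n−1. -/

import Mathlib

/-!
Write `a = (a₁, …, aₙ)` for the column of coordinate functions. Since `∑ aᵢ² = 1`, the functional
`g : y ↦ ∑ aᵢ yᵢ` is a left inverse of `α`, which gives unimodularity, the splitting, and the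
isomorphism `y ↦ ([y], g y)` from `Aⁿ` to `P × A`.

Suppose `P` is free. It is nonzero by invariance of rank, so a coordinate functional of a basis,
composed with `Aⁿ → P`, is a functional `φ` on `Aⁿ` that kills `a` and takes the value `1`.
Evaluated at the points of the sphere, the coefficients of `φ` form a polynomial vector field `w`
with `⟨x, w x⟩ = 0`, and `φ c = 1` prevents `w` from vanishing (`sphere_functional_not_surjective`).
This contradicts the hairy ball theorem (`hairy_ball`).

The hairy ball theorem is proved by Milnor's volume argument. Normalize `w` on the sphere and extend
it to a field `u` homogeneous of degree one, which is globally Lipschitz (`lipschitz_radial`). For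
small `t`, the map `x ↦ x + t u(x)` is then a bijection of the whole space
(`bijective_add_smul`), and since `u(x) ⟂ x` and `‖u(x)‖ = ‖x‖` it scales norms by `√(1 + t²)`, so
it carries the unit ball onto the ball of radius `√(1 + t²)`. By the change of variables formula the
volume of that ball, a constant multiple of `√(1 + t²)ⁿ`, is the integral of `det (1 + t Du)` and
hence a polynomial in `t` (`no_field`), which is impossible for odd `n` (`odd_pow_not_sq`).
-/

/-- The real coordinate ring `ℝ[x₁, …, xₙ]/(x₁² + ⋯ + xₙ² - 1)` of the
`(n-1)`-sphere. -/
abbrev sphereRing (n : ℕ) : Type :=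
  MvPolynomial (Fin n) ℝ ⧸
    Ideal.span {(∑ i : Fin n, MvPolynomial.X i ^ 2 : MvPolynomial (Fin n) ℝ) - 1}

/-- The images `a₁, …, aₙ` of the variables `x₁, …, xₙ` in the coordinate ring of
the sphere. -/
noncomputable def sphereGen (n : ℕ) (i : Fin n) : sphereRing n :=
  Ideal.Quotient.mk _ (MvPolynomial.X i)

/-- The linear map `α : A → Aⁿ`, `a ↦ (a₁ a, …, aₙ a)`, attached to a column
`v = (a₁, …, aₙ)`. -/
noncomputable def colMap {R : Type*} [CommRing R] {n : ℕ} (v : Fin n → R) :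
    R →ₗ[R] (Fin n → R) :=
  LinearMap.pi fun i => LinearMap.mulLeft R (v i)

/-! ### The hairy ball theorem -/

section HairyBall

open MeasureTheory Metric Module

/-- For odd `n` and `c ≠ 0`, `c √(1 + t²)ⁿ` agrees with a polynomial on no infinite set:
after squaring, the polynomial identity `c² (1 + X²)ⁿ = q²` would give `q²` a root at `i` of odd
multiplicity `n`. -/
theorem odd_pow_not_sq {n : ℕ} (hn : Odd n) {c : ℝ} (hc : c ≠ 0) (q : Polynomial ℝ)
    (S : Set ℝ) (hS : S.Infinite)
    (h : ∀ t ∈ S, c * Real.sqrt (1 + t ^ 2) ^ n = q.eval t) : False := by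
  open Polynomial in
  have key : C (c ^ 2) * (1 + X ^ 2) ^ n = q ^ 2 := by
    refine Polynomial.eq_of_infinite_eval_eq _ _ (hS.mono fun t ht => ?_)
    simp only [Set.mem_ofPred_eq, eval_mul, eval_C, eval_pow, eval_add, eval_one, eval_X]
    rw [← h t ht, mul_pow, ← pow_mul, mul_comm n 2, pow_mul, Real.sq_sqrt (by positivity)]
  open Polynomial in
  have hfac : (1 + X ^ 2 : ℂ[X]) = (X - C Complex.I) * (X - C (-Complex.I)) := by
    have : (C Complex.I * C Complex.I : ℂ[X]) = -1 := by
      rw [← C_mul, Complex.I_mul_I]; simp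
    simp only [map_neg]
    linear_combination this
  have key2 := congrArg (Polynomial.map Complex.ofRealHom) key
  simp only [Polynomial.map_mul, Polynomial.map_pow, Polynomial.map_add, Polynomial.map_one,
    Polynomial.map_X, Polynomial.map_C] at key2
  have hcc : Complex.ofRealHom (c ^ 2) ≠ 0 := by simpa using hc
  have hq : q.map Complex.ofRealHom ≠ 0 := by
    intro h0
    rw [h0, hfac] at key2
    have := Polynomial.X_sub_C_ne_zero Complex.I
    have := Polynomial.X_sub_C_ne_zero (-Complex.I)
    simp_all
  have hII : Complex.I ≠ -Complex.I := fun h => by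
    have := congrArg Complex.im h
    norm_num at this
  have hr := congrArg (fun p => Multiset.count Complex.I p.roots) key2
  simp only [hfac, Polynomial.roots_C_mul _ hcc, Polynomial.roots_pow, Multiset.count_nsmul] at hr
  rw [Polynomial.roots_mul (mul_ne_zero (Polynomial.X_sub_C_ne_zero _)
    (Polynomial.X_sub_C_ne_zero _)), Polynomial.roots_X_sub_C, Polynomial.roots_X_sub_C,
    Multiset.count_add, Multiset.count_singleton_self, Multiset.count_singleton, if_neg hII] at hr
  obtain ⟨k, hk⟩ := hn
  omega

theorem det_one_add_smul_poly {E : Type*} [NormedAddCommGroup E] [NormedSpace ℝ E]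
    [FiniteDimensional ℝ E] (A : E →L[ℝ] E) :
    ∃ p : Polynomial ℝ, p.natDegree ≤ finrank ℝ E ∧
      ∀ t : ℝ, p.eval t = (1 + t • A).det := by
  classical
  let b := finBasis ℝ E
  let M := LinearMap.toMatrix b b (A : E →ₗ[ℝ] E)
  refine ⟨Matrix.det ((Polynomial.X : Polynomial ℝ) • M.map Polynomial.C +
    (1 : Matrix _ _ ℝ).map Polynomial.C), ?_, fun t => ?_⟩
  · simpa using Polynomial.natDegree_det_X_add_C_le M 1
  · rw [← Polynomial.coe_evalRingHom, RingHom.map_det]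
    have h1 : (1 + t • A).det = LinearMap.det ((1 + t • A : E →L[ℝ] E) : E →ₗ[ℝ] E) := rfl
    rw [h1, ← LinearMap.det_toMatrix b]
    congr 1
    ext i j
    rcases eq_or_ne i j with rfl | hij
    · simp [M]; ring
    · simp [M, Matrix.one_apply_ne hij]; ring

/-- Multiplied by `‖y‖`, normalization is `2`-Lipschitz. -/
theorem dist_normalize_le {E : Type*} [NormedAddCommGroup E] [NormedSpace ℝ E] {x : E} (y : E)
    (hx : x ≠ 0) (hy : y ≠ 0) : ‖y‖ * ‖‖x‖⁻¹ • x - ‖y‖⁻¹ • y‖ ≤ 2 * ‖x - y‖ := by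
  have hx' : ‖x‖ ≠ 0 := norm_ne_zero_iff.2 hx
  have hy' : ‖y‖ ≠ 0 := norm_ne_zero_iff.2 hy
  have e1 : ‖y‖ * ‖‖x‖⁻¹ • x - ‖y‖⁻¹ • y‖ = ‖((‖y‖ - ‖x‖) * ‖x‖⁻¹) • x + (x - y)‖ := by
    rw [← norm_norm y, ← norm_smul, norm_norm, smul_sub, smul_smul, smul_smul,
      mul_inv_cancel₀ hy', sub_mul, mul_inv_cancel₀ hx', sub_smul]
    congr 1
    module
  rw [e1]
  refine (norm_add_le _ _).trans ?_
  rw [norm_smul, norm_mul, norm_inv, norm_norm, mul_assoc, inv_mul_cancel₀ hx', mul_one]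
  have := abs_norm_sub_norm_le y x
  rw [Real.norm_eq_abs, norm_sub_rev x y]
  linarith

/-- The extension of a unit-length Lipschitz field on the sphere to the whole space, homogeneous of
degree one, is globally Lipschitz. -/
theorem lipschitz_radial {E : Type*} [NormedAddCommGroup E] [NormedSpace ℝ E] {h : E → E}
    {K : NNReal} (hK : LipschitzOnWith K h (sphere 0 1)) (h1 : ∀ x, ‖x‖ = 1 → ‖h x‖ = 1) :
    LipschitzWith (1 + 2 * K) fun x : E => ‖x‖ • h (‖x‖⁻¹ • x) := by
  have hn : ∀ x : E, x ≠ 0 → ‖‖x‖⁻¹ • x‖ = 1 := fun x hx => by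
    rw [norm_smul, norm_inv, norm_norm, inv_mul_cancel₀ (norm_ne_zero_iff.2 hx)]
  have hK0 : (0 : ℝ) ≤ K := K.2
  refine LipschitzWith.of_dist_le_mul fun x y => ?_
  rw [dist_eq_norm, dist_eq_norm]
  push_cast
  rcases eq_or_ne x 0 with rfl | hx
  · rcases eq_or_ne y 0 with rfl | hy
    · simp
    · simp only [norm_zero, zero_smul, zero_sub, norm_neg, norm_smul, norm_norm, h1 _ (hn y hy)]
      nlinarith [norm_nonneg y]
  rcases eq_or_ne y 0 with rfl | hy
  · simp only [norm_zero, zero_smul, sub_zero, norm_smul, norm_norm, h1 _ (hn x hx)]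
    nlinarith [norm_nonneg x]
  have e : ‖x‖ • h (‖x‖⁻¹ • x) - ‖y‖ • h (‖y‖⁻¹ • y) =
      (‖x‖ - ‖y‖) • h (‖x‖⁻¹ • x) + ‖y‖ • (h (‖x‖⁻¹ • x) - h (‖y‖⁻¹ • y)) := by module
  rw [e]
  refine (norm_add_le _ _).trans ?_
  rw [norm_smul, norm_smul, h1 _ (hn x hx), norm_norm, mul_one, Real.norm_eq_abs]
  have a1 := abs_norm_sub_norm_le x y
  have a2 := hK.norm_sub_le (x := ‖x‖⁻¹ • x) (y := ‖y‖⁻¹ • y) (by simpa using hn x hx)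
    (by simpa using hn y hy)
  have a3 := dist_normalize_le y hx hy
  have a4 := mul_le_mul_of_nonneg_left a2 (norm_nonneg y)
  have a5 := mul_le_mul_of_nonneg_left a3 hK0
  linarith

variable {E : Type*} [NormedAddCommGroup E] [InnerProductSpace ℝ E]

theorem norm_add_smul_orth {x v : E} (hxv : inner ℝ x v = 0) (hv : ‖v‖ = ‖x‖) (t : ℝ) :
    ‖x + t • v‖ = Real.sqrt (1 + t ^ 2) * ‖x‖ := by
  refine (sq_eq_sq₀ (norm_nonneg _) (by positivity)).1 ?_
  rw [mul_pow, Real.sq_sqrt (by positivity), norm_add_sq_real,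
    real_inner_smul_right, hxv, norm_smul, hv, mul_pow, Real.norm_eq_abs, sq_abs]
  ring

/-- A perturbation of the identity with Lipschitz constant below `1` is a bijection of the whole
space. -/
theorem bijective_add_smul [FiniteDimensional ℝ E] {u : E → E} {L : NNReal} (hL : LipschitzWith L u) {t : ℝ}
    (ht : |t| * L < 1) : Function.Bijective fun x => x + t • u x := by
  have key : ApproximatesLinearOn (fun x => x + t • u x)
      ((ContinuousLinearEquiv.refl ℝ E : E ≃L[ℝ] E) : E →L[ℝ] E) Set.univ (‖t‖₊ * L) := by
    refine fun x _ y _ => ?_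
    have : x + t • u x - (y + t • u y) - (x - y) = t • (u x - u y) := by module
    simp only [ContinuousLinearEquiv.coe_coe, ContinuousLinearEquiv.coe_refl', id, this,
      norm_smul]
    push_cast
    rw [mul_assoc]
    exact mul_le_mul_of_nonneg_left (hL.norm_sub_le x y) (norm_nonneg _)
  have hc : Subsingleton E ∨ ‖t‖₊ * L <
      ‖((ContinuousLinearEquiv.refl ℝ E).symm : E →L[ℝ] E)‖₊⁻¹ := by
    rcases subsingleton_or_nontrivial E with h | h
    · exact Or.inl h
    · right
      have : ‖((ContinuousLinearEquiv.refl ℝ E).symm : E →L[ℝ] E)‖₊ = 1 := by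
        ext; simp
      rw [this, inv_one, ← NNReal.coe_lt_coe]
      simpa using ht
  exact ⟨Set.injOn_univ.1 (key.injOn hc), key.surjective hc⟩

theorem image_punctured_ball [FiniteDimensional ℝ E] {u : E → E} {L : NNReal} (hL : LipschitzWith L u)
    (hu : ∀ x, inner ℝ x (u x) = 0) (hun : ∀ x, ‖u x‖ = ‖x‖) {t : ℝ} (ht : |t| * L < 1) :
    (fun x => x + t • u x) '' (ball 0 1 \ {0}) = ball 0 (Real.sqrt (1 + t ^ 2)) \ {0} := by
  have hpos : 0 < Real.sqrt (1 + t ^ 2) := Real.sqrt_pos.2 (by positivity)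
  have hmem : ∀ x, x ∈ ball (0 : E) 1 \ {0} ↔ x + t • u x ∈ ball (0 : E) (Real.sqrt (1 + t ^ 2)) \ {0} := by
    intro x
    simp only [Set.mem_sdiff, mem_ball_zero_iff, Set.mem_singleton_iff]
    rw [← ne_eq, ← ne_eq, ← norm_ne_zero_iff (a := x), ← norm_ne_zero_iff (a := x + t • u x), norm_add_smul_orth (hu x) (hun x),
      mul_ne_zero_iff, mul_lt_iff_lt_one_right hpos]
    simp [hpos.ne']
  ext y
  constructor
  · rintro ⟨x, hx, rfl⟩
    exact (hmem x).1 hx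
  · intro hy
    obtain ⟨x, rfl⟩ := (bijective_add_smul hL ht).2 y
    exact ⟨x, (hmem x).2 hy, rfl⟩

/-- Milnor's volume argument for a field `u` extended homogeneously to the whole space. For small
`t` the map `x ↦ x + t u(x)` carries the unit ball onto the ball of radius `√(1 + t²)`, so that the
volume `c √(1 + t²)ⁿ` equals the integral of `det (1 + t Du)`, which is polynomial in `t`. The
origin is removed from both balls because `u` need not be differentiable there. -/
theorem no_field [FiniteDimensional ℝ E] (hodd : Odd (finrank ℝ E)) {u : E → E} {L : NNReal}
    (hL : LipschitzWith L u) (hdiff : ∀ x, x ≠ 0 → DifferentiableAt ℝ u x)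
    (hu : ∀ x, inner ℝ x (u x) = 0) (hun : ∀ x, ‖u x‖ = ‖x‖) : False := by
  borelize E
  have hnt : Nontrivial E := nontrivial_of_finrank_pos hodd.pos
  let μ : Measure E := Measure.addHaar
  set S : Set E := ball 0 1 \ {0} with hS
  have hSm : MeasurableSet S := measurableSet_ball.diff (measurableSet_singleton 0)
  set n := finrank ℝ E with hn
  -- Positivity of the determinant near the identity removes the absolute value
  -- from the Jacobian.
  obtain ⟨ε, hε, hdet⟩ : ∃ ε > 0, ∀ B : E →L[ℝ] E, ‖B - 1‖ < ε → 0 < B.det := by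
    have h0 : {B : E →L[ℝ] E | 0 < B.det} ∈ nhds (1 : E →L[ℝ] E) := by
      refine (isOpen_lt continuous_const ContinuousLinearMap.continuous_det).mem_nhds ?_
      simp [ContinuousLinearMap.det]
    obtain ⟨ε, hε, h⟩ := Metric.mem_nhds_iff.1 h0
    exact ⟨ε, hε, fun B hB => h (by simpa [dist_eq_norm] using hB)⟩
  obtain ⟨δ, hδ, hδ1, hδε⟩ : ∃ δ : ℝ, 0 < δ ∧ δ * L < 1 ∧ δ * L < ε := by
    refine ⟨min 1 ε / (L + 1), by positivity, ?_, ?_⟩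
    all_goals
      rw [div_mul_eq_mul_div, div_lt_iff₀ (by positivity)]
      nlinarith [min_le_left 1 ε, min_le_right 1 ε, lt_min one_pos hε, L.coe_nonneg]
  have hA : ∀ x, ‖fderiv ℝ u x‖ ≤ L := fun x => norm_fderiv_le_of_lipschitz ℝ hL
  have hsmall : ∀ t : ℝ, |t| < δ → |t| * L < 1 ∧ ∀ x, 0 < (1 + t • fderiv ℝ u x).det := by
    intro t ht
    have h1 : |t| * L ≤ δ * L := mul_le_mul_of_nonneg_right ht.le L.coe_nonneg
    refine ⟨h1.trans_lt hδ1, fun x => hdet _ ?_⟩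
    rw [add_sub_cancel_left, norm_smul, Real.norm_eq_abs]
    exact ((mul_le_mul_of_nonneg_left (hA x) (abs_nonneg t)).trans h1).trans_lt hδε
  have hd : ∀ t : ℝ, ∀ x ∈ S, HasFDerivWithinAt (fun x => x + t • u x)
      (1 + t • fderiv ℝ u x) S x := fun t x hx =>
    ((hasFDerivAt_id x).add ((hdiff x hx.2).hasFDerivAt.const_smul t)).hasFDerivWithinAt
  have hinj : ∀ t : ℝ, |t| < δ → Set.InjOn (fun x => x + t • u x) S := fun t ht =>
    ((bijective_add_smul hL (hsmall t ht).1).1).injOn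
  have habs : ∀ t : ℝ, |t| < δ → ∀ x,
      |(1 + t • fderiv ℝ u x).det| = (1 + t • fderiv ℝ u x).det := fun t ht x =>
    abs_of_pos ((hsmall t ht).2 x)
  have hint : ∀ t : ℝ, |t| < δ → IntegrableOn (fun x => (1 + t • fderiv ℝ u x).det) S μ := by
    intro t ht
    have := (integrableOn_image_iff_integrableOn_abs_det_fderiv_smul μ hSm (hd t) (hinj t ht)
      (fun _ => (1 : ℝ))).1 (by
        rw [image_punctured_ball hL hu hun (hsmall t ht).1]
        exact integrableOn_const (((measure_mono Set.sdiff_subset).trans_lt measure_ball_lt_top).ne))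
    simpa [habs t ht] using this
  have hvol : ∀ t : ℝ, |t| < δ → ∫ x in S, (1 + t • fderiv ℝ u x).det ∂μ =
      μ.real (ball 0 1) * Real.sqrt (1 + t ^ 2) ^ n := by
    intro t ht
    have := integral_image_eq_integral_abs_det_fderiv_smul μ hSm (hd t) (hinj t ht)
      (fun _ => (1 : ℝ))
    rw [image_punctured_ball hL hu hun (hsmall t ht).1] at this
    simp only [habs t ht, smul_eq_mul, mul_one] at this
    rw [← this, setIntegral_const, smul_eq_mul, mul_one, measureReal_def,
      measure_sdiff_null (measure_singleton 0), Measure.addHaar_ball μ _ (Real.sqrt_nonneg _),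
      ENNReal.toReal_mul, ENNReal.toReal_ofReal (by positivity), mul_comm]
    rfl
  -- The integral is polynomial in `t` by Lagrange interpolation of the integrand at `n + 1` nodes
  -- in `(0, δ)`, which avoids integrating the coefficients of `det (1 + t Du)` one by one.
  let s : ℕ → ℝ := fun i => δ / (i + 2)
  have hs : ∀ i, |s i| < δ := fun i => by
    have : (0 : ℝ) < i + 2 := by positivity
    rw [abs_of_pos (by positivity), div_lt_iff₀ this]
    nlinarith [(Nat.cast_nonneg i : (0 : ℝ) ≤ i)]
  have hsinj : Function.Injective s := fun i j hij => by
    have : (i : ℝ) + 2 = j + 2 := by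
      have h1 : (i : ℝ) + 2 ≠ 0 := by positivity
      have h2 : (j : ℝ) + 2 ≠ 0 := by positivity
      simp only [s] at hij
      field_simp at hij
      linarith
    exact_mod_cast add_right_cancel this
  let I := Finset.range (n + 1)
  let q := Lagrange.interpolate I s fun i => ∫ x in S, (1 + s i • fderiv ℝ u x).det ∂μ
  refine odd_pow_not_sq hodd (c := μ.real (ball 0 1)) ?_ q (Set.Ioo 0 δ) (Set.Ioo_infinite hδ) ?_
  · exact (ENNReal.toReal_pos (measure_ball_pos μ 0 one_pos).ne' measure_ball_lt_top.ne).ne'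
  intro t ht
  have ht' : |t| < δ := by rw [abs_of_pos ht.1]; exact ht.2
  rw [← hvol t ht']
  have hpt : ∀ x, (1 + t • fderiv ℝ u x).det =
      ∑ i ∈ I, (1 + s i • fderiv ℝ u x).det * (Lagrange.basis I s i).eval t := by
    intro x
    obtain ⟨p, hp, hpe⟩ := det_one_add_smul_poly (fderiv ℝ u x)
    have := Lagrange.eq_interpolate_of_eval_eq (s := I) (v := s) (f := p)
      (r := fun i => (1 + s i • fderiv ℝ u x).det) hsinj.injOn (by
        refine (Polynomial.degree_le_natDegree).trans_lt ?_
        rw [Finset.card_range]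
        exact_mod_cast Nat.lt_succ_of_le hp) (fun i _ => hpe _)
    rw [← hpe, this, Lagrange.interpolate_apply, Polynomial.eval_finsetSum]
    simp
  simp_rw [hpt]
  rw [integral_finsetSum _ fun i _ => (hint _ (hs i)).mul_const _]
  simp only [q, Lagrange.interpolate_apply, Polynomial.eval_finsetSum, integral_mul_const]
  simp

/-- The hairy ball theorem for tangent fields that are restrictions of `C¹` maps of the ambient
space, which has odd dimension. -/
theorem hairy_ball [FiniteDimensional ℝ E] (hodd : Odd (finrank ℝ E)) {w : E → E}
    (hw : ContDiff ℝ 1 w) (ht : ∀ x, ‖x‖ = 1 → inner ℝ x (w x) = 0) :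
    ∃ x, ‖x‖ = 1 ∧ w x = 0 := by
  by_contra! hne
  let h : E → E := fun x => ‖w x‖⁻¹ • w x
  have hh : ∀ x, ‖x‖ = 1 → ContDiffAt ℝ 1 h x := fun x hx =>
    ((hw.contDiffAt.norm ℝ (hne x hx)).inv (norm_ne_zero_iff.2 (hne x hx))).smul hw.contDiffAt
  have h1 : ∀ x, ‖x‖ = 1 → ‖h x‖ = 1 := fun x hx => by
    simp only [h]
    rw [norm_smul, norm_inv, norm_norm, inv_mul_cancel₀ (norm_ne_zero_iff.2 (hne x hx))]
  have hn : ∀ x : E, x ≠ 0 → ‖‖x‖⁻¹ • x‖ = 1 := fun x hx => by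
    rw [norm_smul, norm_inv, norm_norm, inv_mul_cancel₀ (norm_ne_zero_iff.2 hx)]
  obtain ⟨K, hK⟩ : ∃ K, LipschitzOnWith K h (sphere 0 1) := by
    refine LocallyLipschitzOn.exists_lipschitzOnWith_of_compact (isCompact_sphere 0 1) ?_
    intro x hx
    obtain ⟨K, t, ht, hK⟩ := (hh x (by simpa using hx)).exists_lipschitzOnWith
    exact ⟨K, t, mem_nhdsWithin_of_mem_nhds ht, hK⟩
  refine no_field hodd (lipschitz_radial hK h1) (fun x hx => ?_) (fun x => ?_) (fun x => ?_)
  · have hnx : DifferentiableAt ℝ (fun y : E => ‖y‖) x := differentiableAt_id.norm ℝ hx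
    refine hnx.smul ?_
    have hg : DifferentiableAt ℝ (fun y : E => ‖y‖⁻¹ • y) x :=
      (hnx.inv (norm_ne_zero_iff.2 hx)).smul differentiableAt_id
    exact DifferentiableAt.comp x (g := h) ((hh _ (hn x hx)).differentiableAt (by simp)) hg
  · rcases eq_or_ne x 0 with rfl | hx
    · simp
    have := ht _ (hn x hx)
    rw [real_inner_smul_left] at this
    have h2 := (mul_eq_zero.1 this).resolve_left (inv_ne_zero (norm_ne_zero_iff.2 hx))
    simp only [h]
    rw [real_inner_smul_right, real_inner_smul_right, h2]
    simp
  · rcases eq_or_ne x 0 with rfl | hx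
    · simp
    rw [norm_smul, norm_norm, h1 _ (hn x hx), mul_one]

end HairyBall

/-! ### The coordinate ring of the sphere -/

theorem sum_sphereGen_mul_self (n : ℕ) : ∑ i, sphereGen n i * sphereGen n i = 1 := by
  have h : Ideal.Quotient.mk (Ideal.span
      {(∑ i : Fin n, MvPolynomial.X i ^ 2 : MvPolynomial (Fin n) ℝ) - 1})
      ((∑ i : Fin n, MvPolynomial.X i ^ 2 : MvPolynomial (Fin n) ℝ) - 1) = 0 :=
    Ideal.Quotient.eq_zero_iff_mem.2 (Ideal.mem_span_singleton_self _)
  rw [map_sub, map_one, map_sum, sub_eq_zero] at h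
  simpa [sphereGen, sq] using h

/-- Evaluation of an element of the coordinate ring at a point of the sphere. The points are those
of norm one in Euclidean space, so that the inner product structure is available. -/
noncomputable def sphereEval {n : ℕ} (x : EuclideanSpace ℝ (Fin n)) (hx : ‖x‖ = 1) :
    sphereRing n →+* ℝ :=
  Ideal.Quotient.lift _ (MvPolynomial.eval x) (by
    intro p hp
    have hle : Ideal.span {(∑ i : Fin n, MvPolynomial.X i ^ 2 : MvPolynomial (Fin n) ℝ) - 1} ≤
        RingHom.ker (MvPolynomial.eval (x : Fin n → ℝ)) := by
      rw [Ideal.span_singleton_le_iff_mem, RingHom.mem_ker]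
      have := EuclideanSpace.real_norm_sq_eq x
      simp [← this, hx]
    exact hle hp)

theorem contDiff_mvPolynomial_eval {n : ℕ} (p : MvPolynomial (Fin n) ℝ) :
    ContDiff ℝ 1 fun x : EuclideanSpace ℝ (Fin n) => MvPolynomial.eval x p := by
  induction p using MvPolynomial.induction_on with
  | C r => simpa using contDiff_const
  | add p q hp hq => simpa using hp.add hq
  | mul_X p i hp =>
    simpa using hp.mul (contDiff_euclidean.1 contDiff_id i)

/-- Every linear functional on `Aⁿ` that kills the column `(a₁, …, aₙ)` fails to be surjective:
its coefficients, read as polynomials, are the components of a tangent vector field on the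
sphere, and at a zero of that field the functional takes only the value `0`. -/
theorem sphere_functional_not_surjective {n : ℕ} (hodd : Odd n)
    (φ : (Fin n → sphereRing n) →ₗ[sphereRing n] sphereRing n)
    (hφ : φ (sphereGen n) = 0) (c : Fin n → sphereRing n) (hc : φ c = 1) : False := by
  have hexp : ∀ y, φ y = ∑ i, y i * φ (Pi.single i 1) := fun y => by
    conv_lhs => rw [pi_eq_sum_univ' y]
    simp
  choose W hW using fun i => Ideal.Quotient.mk_surjective (φ (Pi.single i 1))
  let w : EuclideanSpace ℝ (Fin n) → EuclideanSpace ℝ (Fin n) := fun x =>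
    WithLp.toLp 2 fun i => MvPolynomial.eval x (W i)
  have hev : ∀ x hx i, sphereEval x hx (φ (Pi.single i 1)) = w x i := fun x hx i => by
    rw [← hW i]; rfl
  have hgen : ∀ x hx i, sphereEval x hx (sphereGen n i) = x i := fun x hx i => by
    exact (Ideal.Quotient.lift_mk _ _ _).trans (MvPolynomial.eval_X i)
  obtain ⟨x, hx, hx0⟩ := hairy_ball (E := EuclideanSpace ℝ (Fin n)) (by simpa using hodd) (w := w)
    (by
      refine contDiff_euclidean.2 fun i => ?_
      exact contDiff_mvPolynomial_eval (W i))
    (fun x hx => by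
      have := congrArg (sphereEval x hx) hφ
      rw [hexp, map_sum, map_zero] at this
      simp only [map_mul, hev, hgen] at this
      rw [← this, PiLp.inner_apply]
      simp [mul_comm])
  have := congrArg (sphereEval x hx) hc
  rw [hexp, map_sum, map_one] at this
  simp [hev, hx0] at this

/-- For odd `n ≥ 3` and `A = ℝ[x₁, …, xₙ]/(x₁² + ⋯ + xₙ² - 1)`,
the column `(a₁, …, aₙ)` of images of the variables is unimodular, the map
`α : A → Aⁿ`, `a ↦ (a₁ a, …, aₙ a)`, is a split monomorphism, and its cokernel `P`
satisfies `P ⊕ A ≅ Aⁿ` but is not free: `P` is a stably free non-free `A`-module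
of rank `n - 1`. -/
theorem sphere_stablyFree_nonfree (n : ℕ) (hn : 3 ≤ n) (hodd : Odd n) :
    Ideal.span (Set.range (sphereGen n)) = ⊤ ∧
    Function.Injective (colMap (sphereGen n)) ∧
    (∃ g : (Fin n → sphereRing n) →ₗ[sphereRing n] sphereRing n,
      g.comp (colMap (sphereGen n)) = LinearMap.id) ∧
    Nonempty ((((Fin n → sphereRing n) ⧸ LinearMap.range (colMap (sphereGen n)))
        × sphereRing n) ≃ₗ[sphereRing n] (Fin n → sphereRing n)) ∧
    ¬ Module.Free (sphereRing n)
        ((Fin n → sphereRing n) ⧸ LinearMap.range (colMap (sphereGen n))) := by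
  have hsum := sum_sphereGen_mul_self n
  set α := colMap (sphereGen n) with hα
  have hαa : ∀ a i, α a i = sphereGen n i * a := fun a i => rfl
  let g : (Fin n → sphereRing n) →ₗ[sphereRing n] sphereRing n :=
    ∑ i, sphereGen n i • LinearMap.proj i
  have hga : ∀ a, g (α a) = a := fun a => by
    simp only [g, LinearMap.sum_apply, LinearMap.smul_apply, LinearMap.proj_apply, hαa, smul_eq_mul,
      ← mul_assoc]
    rw [← Finset.sum_mul, hsum, one_mul]
  have hspan : Ideal.span (Set.range (sphereGen n)) = ⊤ := by
    rw [Ideal.eq_top_iff_one, ← hsum]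
    exact Ideal.sum_mem _ fun i _ => Ideal.mul_mem_left _ _ (Ideal.subset_span ⟨i, rfl⟩)
  let e : (Fin n → sphereRing n) →ₗ[sphereRing n]
      ((Fin n → sphereRing n) ⧸ LinearMap.range α) × sphereRing n :=
    (LinearMap.range α).mkQ.prod g
  have he : Function.Bijective e := by
    constructor
    · rw [← LinearMap.ker_eq_bot, LinearMap.ker_eq_bot']
      intro y hy
      obtain ⟨h1, h2⟩ := Prod.ext_iff.1 hy
      obtain ⟨a, rfl⟩ := (Submodule.Quotient.mk_eq_zero _).1 h1
      have h3 : a = 0 := (hga a).symm.trans h2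
      rw [h3, map_zero]
    · rintro ⟨p, a⟩
      obtain ⟨y, rfl⟩ := Submodule.mkQ_surjective _ p
      refine ⟨y + α (a - g y), Prod.ext ?_ ?_⟩
      · have : (LinearMap.range α).mkQ (α (a - g y)) = 0 :=
          (Submodule.Quotient.mk_eq_zero _).2 ⟨_, rfl⟩
        change (LinearMap.range α).mkQ (y + α (a - g y)) = _
        rw [map_add, this, add_zero]
      · change g (y + α (a - g y)) = a
        rw [map_add, hga, add_sub_cancel]
  let E := LinearEquiv.ofBijective e he
  refine ⟨hspan, Function.LeftInverse.injective hga, ⟨g, LinearMap.ext hga⟩, ⟨E.symm⟩, ?_⟩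
  intro hfree
  have hA : Nontrivial (sphereRing n) :=
    (sphereEval (EuclideanSpace.single (⟨0, by omega⟩ : Fin n) (1 : ℝ)) (by simp)).domain_nontrivial
  -- Otherwise `A ≅ Aⁿ`, against the invariance of rank.
  have hP : Nontrivial ((Fin n → sphereRing n) ⧸ LinearMap.range α) := by
    by_contra hP
    rw [not_nontrivial_iff_subsingleton] at hP
    have h1 := E.finrank_eq
    rw [Module.finrank_fin_fun, Module.finrank_prod, Module.finrank_self,
      Module.finrank_zero_of_subsingleton] at h1
    omega
  let b := Module.Free.chooseBasis (sphereRing n) ((Fin n → sphereRing n) ⧸ LinearMap.range α)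
  obtain ⟨i⟩ := b.index_nonempty
  obtain ⟨c, hc⟩ := Submodule.mkQ_surjective _ (b i)
  refine sphere_functional_not_surjective hodd ((b.coord i).comp (LinearMap.range α).mkQ) ?_ c ?_
  · have : (LinearMap.range α).mkQ (sphereGen n) = 0 :=
      (Submodule.Quotient.mk_eq_zero _).2 ⟨1, funext fun i => by rw [hαa, mul_one]⟩
    rw [LinearMap.comp_apply, this, map_zero]
  · rw [LinearMap.comp_apply, hc]
    simp
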